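/- Let φ(·,z) and θ(·,z) be the fundamental system for 𝓛 y = z y with φ(0,z) = 0, ∂_Rφ(0,z) = 1, θ(0,z) = 1, ∂_Rθ(0,z) = 0, and let φ₀(R) = R(1−R²/3)(1+R²/3)^{−3/2}, θ₀(R) = (1−2R²+R⁴/9)(1+R²/3)^{−3/2}. Then there exist a constant C and functions φ_j, θ_j (j ≥ 1), holomorphic on the half-plane Ω = {u ∈ ℂ : Re u > −1/2}, with |φ_j(u)| ≤ (C^j/(j−1)!) |u| (1+|u|)^{−1/2} and |θ_j(u)| ≤ (C^j/(j−1)!) (1+|u|)^{1/2} on Ω, such that for every z ∈ ℂ and R > 0 the absolutely convergent expansions φ(R,z) = φ₀(R) + R^{−1} Σ_{j≥1} (R²z)^j φ_j(R²) and θ(R,z) = θ₀(R) + Σ_{j≥1} (R²z)^j θ_j(R²) hold. Moreover φ₁(u) = −(u/6)(1+o(1)) as u → 0 and φ₁(u) = (√3/2) u^{1/2} (1+o(1)) as u → +∞. -/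

import Mathlib

/-!
Both `φ₀` and `θ₀` solve `𝓛 y = 0`, so variation of parameters turns `𝓛 y = z y` into the Volterra
equation `y = f + z V y` with `f` a zero-energy solution, whence `y = ∑ zⁿ Vⁿ f`. With `s = R t` and
`u = R²`, the operator `V` maps `sᵐ g(s²)` to `R^(m+2)` times a function of `R²` given by integrals
over dilations `t² u`, `t ∈ [0, 1]`. These make sense on any domain that is star-shaped about `0`,
so the iterates `Vⁿ f` extend holomorphically to `Ω`. On `Ω` the profiles of `φ₀` and `θ₀` are
bounded by `(1 + |u|)^(∓1/2)` and `V` respects these weights; the factor `t^(2n)` gained at the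
`n`-th iteration integrates to at most `1/(n+1)`, which accounts for the factorials. The behaviour
of `φ₁` at `∞` follows from `φ₀(R) → -√3` and `θ₀(R)/R → √3/3` by dominated convergence.
-/

open Filter Topology

noncomputable section

namespace SmallEnergyExpansion

/-- `φ₀(R) = R(1 - R²/3)(1 + R²/3)^{-3/2}`. -/
def φ₀ (R : ℝ) : ℝ := R * (1 - R ^ 2 / 3) * (1 + R ^ 2 / 3) ^ (-(3 : ℝ) / 2)

/-- `θ₀(R) = (1 - 2R² + R⁴/9)(1 + R²/3)^{-3/2}`. -/
def θ₀ (R : ℝ) : ℝ := (1 - 2 * R ^ 2 + R ^ 4 / 9) * (1 + R ^ 2 / 3) ^ (-(3 : ℝ) / 2)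

section

open Set Complex MeasureTheory

section Volterra

variable {𝕜 : Type*} [RCLike 𝕜]

/-- The Volterra operator `y ↦ ∫₀ˣ K(x,s) y(s) ds` of a continuous kernel. Acting on bundled
continuous functions makes it an element of the ring of endomorphisms, so that Picard iteration
becomes a geometric series in that ring. -/
def volterra (K : C(ℝ × ℝ, 𝕜)) : C(ℝ, 𝕜) →ₗ[𝕜] C(ℝ, 𝕜) where
  toFun y :=
    ⟨fun x => ∫ s in (0 : ℝ)..x, K (x, s) * y s,
      intervalIntegral.continuous_parametric_intervalIntegral_of_continuous
        (f := fun x s => K (x, s) * y s) (by fun_prop) continuous_id⟩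
  map_add' y₁ y₂ := by
    ext x
    simp only [ContinuousMap.coe_mk, ContinuousMap.add_apply, mul_add]
    exact intervalIntegral.integral_add (Continuous.intervalIntegrable (by fun_prop) _ _)
      (Continuous.intervalIntegrable (by fun_prop) _ _)
  map_smul' c y := by
    ext x
    simp only [ContinuousMap.coe_mk, ContinuousMap.smul_apply, smul_eq_mul, RingHom.id_apply,
      mul_left_comm _ c, intervalIntegral.integral_const_mul]

lemma volterra_apply (K : C(ℝ × ℝ, 𝕜)) (y : C(ℝ, 𝕜)) (x : ℝ) :
    volterra K y x = ∫ s in (0 : ℝ)..x, K (x, s) * y s := rfl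

lemma norm_volterra_pow_le {K : C(ℝ × ℝ, 𝕜)} {y : C(ℝ, 𝕜)} {R M B : ℝ}
    (hK : ∀ x ∈ Icc 0 R, ∀ s ∈ Icc 0 R, ‖K (x, s)‖ ≤ M) (hy : ∀ x ∈ Icc 0 R, ‖y x‖ ≤ B) (n : ℕ) :
    ∀ x ∈ Icc 0 R, ‖(volterra K ^ n) y x‖ ≤ B * (M * x) ^ n / n.factorial := by
  induction n with
  | zero => simpa using hy
  | succ n ih =>
    intro x hx
    rw [pow_succ', Module.End.mul_apply, volterra_apply]
    calc ‖∫ s in (0 : ℝ)..x, K (x, s) * (volterra K ^ n) y s‖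
        ≤ ∫ s in (0 : ℝ)..x, M * (B * M ^ n / n.factorial) * s ^ n := by
          refine intervalIntegral.norm_integral_le_of_norm_le hx.1 (.of_forall fun s hs => ?_)
            (Continuous.intervalIntegrable (by fun_prop) _ _)
          have hs' : s ∈ Icc 0 R := ⟨hs.1.le, hs.2.trans hx.2⟩
          calc ‖K (x, s) * (volterra K ^ n) y s‖
              ≤ M * (B * (M * s) ^ n / n.factorial) :=
                norm_mul_le_of_le (hK x hx s hs') (ih s hs')
            _ = M * (B * M ^ n / n.factorial) * s ^ n := by ring
      _ = B * (M * x) ^ (n + 1) / (n + 1).factorial := by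
          rw [intervalIntegral.integral_const_mul, integral_pow, Nat.factorial_succ]
          push_cast
          field_simp
          ring

lemma summable_volterra_pow (K : C(ℝ × ℝ, 𝕜)) (y : C(ℝ, 𝕜)) (z : 𝕜) {R : ℝ} (hR : 0 ≤ R) :
    Summable fun n => z ^ n * (volterra K ^ n) y R := by
  obtain ⟨M, hM⟩ := (isCompact_Icc.prod isCompact_Icc : IsCompact (Icc 0 R ×ˢ Icc 0 R))
    |>.exists_bound_of_continuousOn K.continuous.continuousOn
  obtain ⟨B, hB⟩ := (isCompact_Icc : IsCompact (Icc 0 R)).exists_bound_of_continuousOn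
    y.continuous.continuousOn
  have bound (n : ℕ) : ‖z ^ n * (volterra K ^ n) y R‖ ≤ B * ((‖z‖ * (M * R)) ^ n / n.factorial) :=
    calc ‖z ^ n * (volterra K ^ n) y R‖ ≤ ‖z‖ ^ n * (B * (M * R) ^ n / n.factorial) :=
          norm_mul_le_of_le (norm_pow z n).le
            (norm_volterra_pow_le (fun x hx s hs => hM (x, s) ⟨hx, hs⟩) hB n R ⟨hR, le_rfl⟩)
      _ = B * ((‖z‖ * (M * R)) ^ n / n.factorial) := by ring
  exact .of_norm_bounded ((Real.summable_pow_div_factorial _).mul_left B) bound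

lemma hasSum_volterra_pow {K : C(ℝ × ℝ, 𝕜)} {f y : C(ℝ, 𝕜)} {z : 𝕜}
    (h : y = f + z • volterra K y) {R : ℝ} (hR : 0 ≤ R) :
    HasSum (fun n => z ^ n * (volterra K ^ n) f R) (y R) := by
  have hf : f = (1 - z • volterra K) y := by
    rw [LinearMap.sub_apply, Module.End.one_apply, LinearMap.smul_apply]
    exact eq_sub_of_add_eq h.symm
  have partialSum (n : ℕ) : ∑ j ∈ Finset.range n, z ^ j * (volterra K ^ j) f R
      = y R - z ^ n * (volterra K ^ n) y R := by
    have := congr($(geom_sum_mul_neg (z • volterra K) n) y R)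
    simpa [Module.End.mul_apply, ← hf, smul_pow, LinearMap.sum_apply] using this
  rw [(summable_volterra_pow K f z hR).hasSum_iff_tendsto_nat]
  simpa [partialSum] using
    (summable_volterra_pow K y z hR).tendsto_atTop_zero.const_sub (y R)

end Volterra

section VariationOfParameters

variable {𝕜 : Type*} [RCLike 𝕜]

/-- `y` solves the Schrödinger equation `y'' = Q y` on the line, with derivative `y'`. -/
structure IsSolution (Q y y' : ℝ → 𝕜) : Prop where
  hasDerivAt (x : ℝ) : HasDerivAt y (y' x) x
  hasDerivAt_deriv (x : ℝ) : HasDerivAt y' (Q x * y x) x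

variable {Q Q₁ a a' b b' y y' : ℝ → 𝕜}

lemma IsSolution.continuous (h : IsSolution Q y y') : Continuous y :=
  continuous_iff_continuousAt.2 fun x => (h.hasDerivAt x).continuousAt

lemma IsSolution.ofReal {Q y y' : ℝ → ℝ} (h : IsSolution Q y y') :
    IsSolution (fun x => (Q x : ℂ)) (fun x => (y x : ℂ)) (fun x => (y' x : ℂ)) where
  hasDerivAt x := (h.hasDerivAt x).ofReal_comp
  hasDerivAt_deriv x := by simpa using (h.hasDerivAt_deriv x).ofReal_comp

lemma IsSolution.wronskian_eq (ha : IsSolution Q a a') (hb : IsSolution Q b b') (x₀ x : ℝ) :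
    a' x * b x - a x * b' x = a' x₀ * b x₀ - a x₀ * b' x₀ := by
  have hW (x : ℝ) : HasDerivAt (fun x => a' x * b x - a x * b' x) 0 x :=
    (((ha.hasDerivAt_deriv x).fun_mul (hb.hasDerivAt x)).fun_sub
      ((ha.hasDerivAt x).fun_mul (hb.hasDerivAt_deriv x))).congr_deriv (by ring)
  exact is_const_of_deriv_eq_zero (fun x => (hW x).differentiableAt) (fun x => (hW x).deriv) x x₀

lemma IsSolution.variation_of_parameters
    (ha : IsSolution Q a a') (ha0 : a 0 = 0) (ha0' : a' 0 = 1)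
    (hb : IsSolution Q b b') (hb0 : b 0 = 1) (hb0' : b' 0 = 0)
    (hy : IsSolution Q₁ y y') (hQ : Continuous (Q₁ - Q)) (x : ℝ) :
    y x = y' 0 * a x + y 0 * b x
      + ∫ s in (0 : ℝ)..x, (a x * b s - b x * a s) * ((Q₁ s - Q s) * y s) := by
  have hderiv (s : ℝ) : HasDerivAt
      (fun s => y' s * (a x * b s - b x * a s) - y s * (a x * b' s - b x * a' s))
      ((a x * b s - b x * a s) * ((Q₁ s - Q s) * y s)) s := by
    refine (((hy.hasDerivAt_deriv s).fun_mul (((hb.hasDerivAt s).const_mul (a x)).fun_sub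
      ((ha.hasDerivAt s).const_mul (b x)))).fun_sub ((hy.hasDerivAt s).fun_mul
      (((hb.hasDerivAt_deriv s).const_mul (a x)).fun_sub
        ((ha.hasDerivAt_deriv s).const_mul (b x))))).congr_deriv ?_
    ring
  have hcont : Continuous fun s => (a x * b s - b x * a s) * ((Q₁ s - Q s) * y s) := by
    have := ha.continuous
    have := hb.continuous
    exact .mul (by fun_prop) (hQ.mul hy.continuous)
  have hW : a' x * b x - a x * b' x = 1 := by simpa [ha0, ha0', hb0] using ha.wronskian_eq hb 0 x
  rw [intervalIntegral.integral_eq_sub_of_hasDerivAt (fun s _ => hderiv s)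
    (hcont.intervalIntegrable _ _), ha0, ha0', hb0, hb0']
  linear_combination -y x * hW

end VariationOfParameters

section DilationMoment

lemma hasDerivAt_intervalIntegral_of_continuousOn {𝕜 E : Type*} [RCLike 𝕜] [NormedAddCommGroup E]
    [NormedSpace ℝ E] [NormedSpace 𝕜 E] {U : Set 𝕜} (hU : IsOpen U) {a b : ℝ} {f f' : 𝕜 → ℝ → E}
    (hf : ∀ z ∈ U, ContinuousOn (f z) (uIcc a b))
    (hf' : ContinuousOn (Function.uncurry f') (U ×ˢ uIcc a b))
    (hderiv : ∀ z ∈ U, ∀ t ∈ uIcc a b, HasDerivAt (f · t) (f' z t) z) {z : 𝕜} (hz : z ∈ U) :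
    HasDerivAt (fun z => ∫ t in a..b, f z t) (∫ t in a..b, f' z t) z := by
  obtain ⟨ε, hε, hball⟩ := Metric.nhds_basis_closedBall.mem_iff.1 (hU.mem_nhds hz)
  obtain ⟨M, hM⟩ := ((isCompact_closedBall z ε).prod isCompact_uIcc).exists_bound_of_continuousOn
    (hf'.mono (prod_mono_left hball))
  have hmeas {g : ℝ → E} (hg : ContinuousOn g (uIcc a b)) :
      AEStronglyMeasurable g (volume.restrict (uIoc a b)) :=
    (hg.mono uIoc_subset_uIcc).aestronglyMeasurable measurableSet_uIoc
  refine (intervalIntegral.hasDerivAt_integral_of_dominated_loc_of_deriv_le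
    (Metric.closedBall_mem_nhds z hε) ?_ (hf z hz).intervalIntegrable
    (hmeas (hf'.comp (f := fun t => (z, t)) (by fun_prop) fun t ht => ⟨hz, ht⟩))
    (bound := fun _ => M) ?_ intervalIntegrable_const ?_).2
  · filter_upwards [hU.mem_nhds hz] with w hw using hmeas (hf w hw)
  · exact .of_forall fun t ht w hw => hM (w, t) ⟨hw, uIoc_subset_uIcc ht⟩
  · exact .of_forall fun t ht w hw => hderiv w (hball hw) t (uIoc_subset_uIcc ht)

/-- The moment `∫₀¹ tᵐ F(t²u) dt`: up to the factor `R^(m+1)`, the integral of `sᵐ F(s²)` over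
`[0, R]` written in the variable `u = R²`, in which it continues analytically. -/
def dilationMoment (m : ℕ) (F : ℂ → ℂ) (u : ℂ) : ℂ :=
  ∫ t in (0 : ℝ)..1, (t : ℂ) ^ m * F ((t : ℂ) ^ 2 * u)

lemma pow_mul_dilationMoment_sq (m : ℕ) (F : ℂ → ℂ) (R : ℝ) :
    (R : ℂ) ^ (m + 1) * dilationMoment m F ((R : ℂ) ^ 2)
      = ∫ s in (0 : ℝ)..R, (s : ℂ) ^ m * F ((s : ℂ) ^ 2) := by
  have h := intervalIntegral.smul_integral_comp_mul_left (a := 0) (b := 1)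
    (fun s : ℝ => (s : ℂ) ^ m * F ((s : ℂ) ^ 2)) R
  rw [mul_zero, mul_one] at h
  rw [← h, dilationMoment, real_smul, pow_succ', mul_assoc, ← intervalIntegral.integral_const_mul]
  congr 2 with t
  rw [ofReal_mul, mul_pow, mul_pow, mul_comm ((R : ℂ) ^ 2), mul_assoc]

lemma dilationMoment_zero (m : ℕ) (F : ℂ → ℂ) : dilationMoment m F 0 = F 0 / (m + 1) := by
  simp only [dilationMoment, mul_zero, intervalIntegral.integral_mul_const, ← ofReal_pow,
    intervalIntegral.integral_ofReal, integral_pow]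
  simp [div_eq_inv_mul]

lemma mul_dilationMoment_add_two (m : ℕ) (F : ℂ → ℂ) (u : ℂ) :
    u * dilationMoment (m + 2) F u = dilationMoment m (fun v => v * F v) u := by
  rw [dilationMoment, dilationMoment, ← intervalIntegral.integral_const_mul]
  congr 1 with t
  ring

lemma ofReal_sq_mul_mem_of_starConvex {S : Set ℂ} (hS : StarConvex ℝ 0 S) {u : ℂ} (hu : u ∈ S)
    {t : ℝ} (ht : t ∈ Icc (0 : ℝ) 1) : (t : ℂ) ^ 2 * u ∈ S := by
  simpa using hS.smul_mem hu (sq_nonneg t) (pow_le_one₀ ht.1 ht.2)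

lemma differentiableOn_dilationMoment {S : Set ℂ} (hS : IsOpen S) (hS' : StarConvex ℝ 0 S) (m : ℕ)
    {F : ℂ → ℂ} (hF : DifferentiableOn ℂ F S) : DifferentiableOn ℂ (dilationMoment m F) S := by
  intro u hu
  have hmem {v : ℂ} (hv : v ∈ S) {t : ℝ} (ht : t ∈ uIcc (0 : ℝ) 1) : (t : ℂ) ^ 2 * v ∈ S :=
    ofReal_sq_mul_mem_of_starConvex hS' hv (uIcc_of_le (zero_le_one' ℝ) ▸ ht)
  refine (hasDerivAt_intervalIntegral_of_continuousOn hS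
    (f := fun v t => (t : ℂ) ^ m * F ((t : ℂ) ^ 2 * v))
    (f' := fun v t => (t : ℂ) ^ m * (deriv F ((t : ℂ) ^ 2 * v) * (t : ℂ) ^ 2))
    (fun v hv => ?_) ?_ (fun v hv t ht => ?_) hu).differentiableAt.differentiableWithinAt
  · exact .mul (by fun_prop) (hF.continuousOn.comp (by fun_prop) fun t ht => hmem hv ht)
  · have hderiv : ContinuousOn (fun q : ℂ × ℝ => deriv F ((q.2 : ℂ) ^ 2 * q.1))
        (S ×ˢ uIcc (0 : ℝ) 1) :=
      (hF.deriv hS).continuousOn.comp (by fun_prop) fun q hq => hmem hq.1 hq.2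
    exact .mul (by fun_prop) (hderiv.mul (by fun_prop))
  · have hF' := (hF.differentiableAt (hS.mem_nhds (hmem hv ht))).hasDerivAt
    exact (hF'.comp v (hasDerivAt_const_mul ((t : ℂ) ^ 2))).const_mul _

lemma norm_dilationMoment_le {m n : ℕ} {F : ℂ → ℂ} {u : ℂ} {K : ℝ} (hK : 0 ≤ K)
    (h : ∀ t ∈ Ioc (0 : ℝ) 1, t ^ m * ‖F ((t : ℂ) ^ 2 * u)‖ ≤ K * t ^ (2 * n)) :
    ‖dilationMoment m F u‖ ≤ K / (n + 1) := by
  calc ‖dilationMoment m F u‖ ≤ ∫ t in (0 : ℝ)..1, K * t ^ (2 * n) := by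
        refine intervalIntegral.norm_integral_le_of_norm_le zero_le_one (.of_forall fun t ht => ?_)
          (Continuous.intervalIntegrable (by fun_prop) _ _)
        rw [norm_mul, norm_pow, norm_real, Real.norm_of_nonneg ht.1.le]
        exact h t ht
    _ = K / (2 * n + 1) := by simp [integral_pow, div_eq_mul_inv]
    _ ≤ K / (n + 1) := by gcongr; linarith [n.cast_nonneg (α := ℝ)]

lemma tendsto_dilationMoment_atTop (m : ℕ) {F : ℂ → ℂ} {c : ℂ} {M : ℝ}
    (hF : ContinuousOn (fun r : ℝ => F r) (Ici 0)) (hM : ∀ r : ℝ, 0 ≤ r → ‖F r‖ ≤ M)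
    (hlim : Tendsto (fun r : ℝ => F r) atTop (𝓝 c)) :
    Tendsto (fun r : ℝ => dilationMoment m F r) atTop (𝓝 (c / (m + 1))) := by
  have hmoment : ∫ t in (0 : ℝ)..1, (t : ℂ) ^ m * c = c / (m + 1) := by
    simpa [dilationMoment] using dilationMoment_zero m fun _ => c
  have hcast (t r : ℝ) : (t : ℂ) ^ 2 * r = ((t ^ 2 * r : ℝ) : ℂ) := by push_cast; rfl
  simp only [dilationMoment, hcast, ← hmoment]
  refine intervalIntegral.tendsto_integral_filter_of_dominated_convergence (fun _ => M) ?_ ?_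
    intervalIntegrable_const ?_
  · filter_upwards [eventually_ge_atTop 0] with r hr
    refine Continuous.aestronglyMeasurable (.mul (by fun_prop) ?_)
    exact hF.comp_continuous (by fun_prop) fun t => mem_Ici.2 (by positivity)
  · filter_upwards [eventually_ge_atTop 0] with r hr
    refine .of_forall fun t ht => ?_
    rw [uIoc_of_le zero_le_one] at ht
    rw [norm_mul, norm_pow, norm_real, Real.norm_of_nonneg ht.1.le]
    exact (mul_le_of_le_one_left (norm_nonneg _) (pow_le_one₀ ht.1.le ht.2)).trans
      (hM _ (by positivity))
  · refine .of_forall fun t ht => ?_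
    rw [uIoc_of_le zero_le_one] at ht
    exact (hlim.comp (tendsto_id.const_mul_atTop (pow_pos ht.1 2))).const_mul _

end DilationMoment

section ProfileCoeff

/-- The Volterra operator with kernel `b(R) a(s) - a(R) b(s)`, where `a(R) = R α(R²)` and
`b(R) = β(R²)`, in the variable `u = R²`: it maps `sᵐ g(s²)` to
`R^(m+2) (profileStep α β m g)(R²)`. -/
def profileStep (α β : ℂ → ℂ) (m : ℕ) (g : ℂ → ℂ) (u : ℂ) : ℂ :=
  β u * dilationMoment (m + 1) (α * g) u - α u * dilationMoment m (β * g) u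

/-- The profiles `g_n` of the Picard iterates `R^(2n+p) g_n(R²)` started at `R^p F(R²)`. -/
def profileCoeff (α β : ℂ → ℂ) (p : ℕ) (F : ℂ → ℂ) : ℕ → ℂ → ℂ
  | 0 => F
  | n + 1 => profileStep α β (2 * n + p) (profileCoeff α β p F n)

variable {α β F g : ℂ → ℂ}

lemma differentiableOn_profileCoeff {S : Set ℂ} (hS : IsOpen S) (hS' : StarConvex ℝ 0 S)
    (hα : DifferentiableOn ℂ α S) (hβ : DifferentiableOn ℂ β S) (hF : DifferentiableOn ℂ F S)
    (p n : ℕ) : DifferentiableOn ℂ (profileCoeff α β p F n) S := by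
  induction n with
  | zero => exact hF
  | succ n ih =>
    exact (hβ.mul (differentiableOn_dilationMoment hS hS' _ (hα.mul ih))).sub
      (hα.mul (differentiableOn_dilationMoment hS hS' _ (hβ.mul ih)))

lemma integral_mul_profile (hα : Continuous fun s : ℝ => α ((s : ℂ) ^ 2))
    (hβ : Continuous fun s : ℝ => β ((s : ℂ) ^ 2)) (hg : Continuous fun s : ℝ => g ((s : ℂ) ^ 2))
    (m : ℕ) (R : ℝ) :
    ∫ s in (0 : ℝ)..R, (β ((R : ℂ) ^ 2) * (s * α ((s : ℂ) ^ 2))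
        - R * α ((R : ℂ) ^ 2) * β ((s : ℂ) ^ 2)) * ((s : ℂ) ^ m * g ((s : ℂ) ^ 2))
      = (R : ℂ) ^ (m + 2) * profileStep α β m g ((R : ℂ) ^ 2) := by
  have hsplit (s : ℝ) : (β ((R : ℂ) ^ 2) * (s * α ((s : ℂ) ^ 2))
        - R * α ((R : ℂ) ^ 2) * β ((s : ℂ) ^ 2)) * ((s : ℂ) ^ m * g ((s : ℂ) ^ 2))
      = β ((R : ℂ) ^ 2) * ((s : ℂ) ^ (m + 1) * (α * g) ((s : ℂ) ^ 2))
        - R * α ((R : ℂ) ^ 2) * ((s : ℂ) ^ m * (β * g) ((s : ℂ) ^ 2)) := by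
    simp only [Pi.mul_apply]
    ring
  simp only [hsplit]
  rw [intervalIntegral.integral_sub, intervalIntegral.integral_const_mul,
    intervalIntegral.integral_const_mul, ← pow_mul_dilationMoment_sq, ← pow_mul_dilationMoment_sq,
    profileStep]
  · ring
  · exact (continuous_const.mul (.mul (by fun_prop) (hα.mul hg))).intervalIntegrable _ _
  · exact (continuous_const.mul (.mul (by fun_prop) (hβ.mul hg))).intervalIntegrable _ _

/-- `D` is a size of profiles that `profileStep` respects at every stage `m = 2n + p`, when `α` and
`β` are of sizes `1/w` and `w`: both of its integrands are then at most `t^(2n)` times their values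
at `t = 1`. -/
structure IsProfileWeight (w D : ℂ → ℝ) (p : ℕ) : Prop where
  pos (u : ℂ) : 0 < D u
  pow_mul_le (u : ℂ) {t : ℝ} (ht : t ∈ Ioc (0 : ℝ) 1) :
    t ^ p * (w ((t : ℂ) ^ 2 * u) * D ((t : ℂ) ^ 2 * u)) ≤ w u * D u
  pow_succ_mul_inv_le (u : ℂ) {t : ℝ} (ht : t ∈ Ioc (0 : ℝ) 1) :
    t ^ (p + 1) * ((w ((t : ℂ) ^ 2 * u))⁻¹ * D ((t : ℂ) ^ 2 * u)) ≤ (w u)⁻¹ * D u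

variable {S : Set ℂ} {w D : ℂ → ℝ} {p : ℕ} {A K : ℝ}

lemma norm_dilationMoment_mul_le {f g : ℂ → ℂ} {W : ℂ → ℝ} {k : ℕ} (hS : StarConvex ℝ 0 S)
    (hA : 0 ≤ A) (hK : 0 ≤ K) (hf : ∀ u ∈ S, ‖f u‖ ≤ A * W u) (hg : ∀ u ∈ S, ‖g u‖ ≤ K * D u)
    {u : ℂ} (hu : u ∈ S) (hWD : ∀ t ∈ Ioc (0 : ℝ) 1,
      t ^ k * (W ((t : ℂ) ^ 2 * u) * D ((t : ℂ) ^ 2 * u)) ≤ W u * D u) (n : ℕ) :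
    ‖dilationMoment (2 * n + k) (f * g) u‖ ≤ A * K * (W u * D u) / (n + 1) := by
  have hmul {v : ℂ} (hv : v ∈ S) : ‖(f * g) v‖ ≤ A * K * (W v * D v) :=
    (norm_mul_le_of_le (hf v hv) (hg v hv)).trans_eq (by ring)
  refine norm_dilationMoment_le ((norm_nonneg _).trans (hmul hu)) fun t ht => ?_
  have ht0 := ht.1
  calc t ^ (2 * n + k) * ‖(f * g) ((t : ℂ) ^ 2 * u)‖
      ≤ t ^ (2 * n + k) * (A * K * (W ((t : ℂ) ^ 2 * u) * D ((t : ℂ) ^ 2 * u))) := by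
        gcongr
        exact hmul (ofReal_sq_mul_mem_of_starConvex hS hu ⟨ht.1.le, ht.2⟩)
    _ = A * K * t ^ (2 * n) * (t ^ k * (W ((t : ℂ) ^ 2 * u) * D ((t : ℂ) ^ 2 * u))) := by ring
    _ ≤ A * K * t ^ (2 * n) * (W u * D u) :=
        mul_le_mul_of_nonneg_left (hWD t ht) (by positivity)
    _ = A * K * (W u * D u) * t ^ (2 * n) := by ring

lemma norm_profileStep_le (hS : StarConvex ℝ 0 S) (hw : ∀ u, 0 < w u)
    (hD : IsProfileWeight w D p) (hA : 0 ≤ A) (hK : 0 ≤ K) (hα : ∀ u ∈ S, ‖α u‖ ≤ A * (w u)⁻¹)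
    (hβ : ∀ u ∈ S, ‖β u‖ ≤ A * w u) (hg : ∀ u ∈ S, ‖g u‖ ≤ K * D u) (n : ℕ) {u : ℂ} (hu : u ∈ S) :
    ‖profileStep α β (2 * n + p) g u‖ ≤ 2 * A ^ 2 * K / (n + 1) * D u := by
  have hwu := hw u
  have hβg : ‖dilationMoment (2 * n + p) (β * g) u‖ ≤ A * K * (w u * D u) / (n + 1) :=
    norm_dilationMoment_mul_le hS hA hK hβ hg hu (fun _ => hD.pow_mul_le u) n
  have hαg : ‖dilationMoment (2 * n + (p + 1)) (α * g) u‖ ≤ A * K * ((w u)⁻¹ * D u) / (n + 1) :=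
    norm_dilationMoment_mul_le hS hA hK hα hg hu (fun _ => hD.pow_succ_mul_inv_le u) n
  calc ‖profileStep α β (2 * n + p) g u‖
      ≤ A * w u * (A * K * ((w u)⁻¹ * D u) / (n + 1))
        + A * (w u)⁻¹ * (A * K * (w u * D u) / (n + 1)) :=
        norm_sub_le_of_le (norm_mul_le_of_le (hβ u hu) hαg) (norm_mul_le_of_le (hα u hu) hβg)
    _ = 2 * A ^ 2 * K / (n + 1) * D u := by field_simp; ring

lemma norm_profileCoeff_le (hS : StarConvex ℝ 0 S) (hw : ∀ u, 0 < w u)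
    (hD : IsProfileWeight w D p) (hA : 0 ≤ A) (hα : ∀ u ∈ S, ‖α u‖ ≤ A * (w u)⁻¹)
    (hβ : ∀ u ∈ S, ‖β u‖ ≤ A * w u) (hF : ∀ u ∈ S, ‖F u‖ ≤ A * D u) (n : ℕ) :
    ∀ u ∈ S, ‖profileCoeff α β p F n u‖ ≤ A * (2 * A ^ 2) ^ n / n.factorial * D u := by
  induction n with
  | zero => simpa [profileCoeff] using hF
  | succ n ih =>
    intro u hu
    refine (norm_profileStep_le hS hw hD hA (by positivity) hα hβ ih n hu).trans_eq ?_
    rw [Nat.factorial_succ]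
    push_cast
    field_simp
    ring

end ProfileCoeff

section ZeroEnergy

/-- The potential of `𝓛`, so that `𝓛 y = z y` reads `y'' = (potential - z) y`. -/
def potential (R : ℝ) : ℝ := -(5 / (1 + R ^ 2 / 3) ^ 2)

lemma hasDerivAt_mul_one_add_sq_div_three_rpow {P : ℝ → ℝ} {P' R : ℝ} (hP : HasDerivAt P P' R)
    (r : ℝ) :
    HasDerivAt (fun R => P R * (1 + R ^ 2 / 3) ^ r)
      ((P' * (1 + R ^ 2 / 3) + 2 * r / 3 * R * P R) * (1 + R ^ 2 / 3) ^ (r - 1)) R := by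
  have hpos : 0 < 1 + R ^ 2 / 3 := by positivity
  have hbase : HasDerivAt (fun R : ℝ => 1 + R ^ 2 / 3) (2 * R / 3) R := by
    simpa using ((hasDerivAt_pow 2 R).div_const 3).const_add 1
  refine (hP.fun_mul (hbase.rpow_const (p := r) (.inl hpos.ne'))).congr_deriv ?_
  have hr : (1 + R ^ 2 / 3) ^ r = (1 + R ^ 2 / 3) * (1 + R ^ 2 / 3) ^ (r - 1) := by
    rw [Real.rpow_sub_one hpos.ne', mul_div_cancel₀ _ hpos.ne']
  rw [hr]
  ring

lemma potential_mul_rpow (R : ℝ) :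
    potential R * (1 + R ^ 2 / 3) ^ (-(3 : ℝ) / 2)
      = -5 * (1 + R ^ 2 / 3) ^ (-(5 : ℝ) / 2 - 1) := by
  have hpos : 0 < 1 + R ^ 2 / 3 := by positivity
  rw [show -(5 : ℝ) / 2 - 1 = -3 / 2 - (2 : ℕ) by norm_num, Real.rpow_sub_natCast hpos.ne',
    potential]
  ring

lemma isSolution_φ₀ : IsSolution potential φ₀
    fun R => (1 - 5 * R ^ 2 / 3) * (1 + R ^ 2 / 3) ^ (-(5 : ℝ) / 2) where
  hasDerivAt R := by
    have hP : HasDerivAt (fun R : ℝ => R * (1 - R ^ 2 / 3)) (1 - R ^ 2) R :=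
      ((hasDerivAt_id' R).fun_mul (((hasDerivAt_pow 2 R).div_const 3).const_sub 1)).congr_deriv
        (by ring)
    refine (hasDerivAt_mul_one_add_sq_div_three_rpow hP (-(3 : ℝ) / 2)).congr_deriv ?_
    rw [show -(3 : ℝ) / 2 - 1 = -5 / 2 by norm_num]
    ring
  hasDerivAt_deriv R := by
    have hP : HasDerivAt (fun R : ℝ => 1 - 5 * R ^ 2 / 3) (-(10 * R / 3)) R :=
      ((((hasDerivAt_pow 2 R).const_mul 5).div_const 3).const_sub 1).congr_deriv (by ring)
    refine (hasDerivAt_mul_one_add_sq_div_three_rpow hP (-(5 : ℝ) / 2)).congr_deriv ?_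
    rw [φ₀]
    linear_combination -(R * (1 - R ^ 2 / 3)) * potential_mul_rpow R

lemma isSolution_θ₀ : IsSolution potential θ₀
    fun R => R * (-5 + 10 * R ^ 2 / 9 + R ^ 4 / 27) * (1 + R ^ 2 / 3) ^ (-(5 : ℝ) / 2) where
  hasDerivAt R := by
    have hP : HasDerivAt (fun R : ℝ => 1 - 2 * R ^ 2 + R ^ 4 / 9) (-4 * R + 4 * R ^ 3 / 9) R :=
      ((((hasDerivAt_pow 2 R).const_mul 2).const_sub 1).fun_add
        ((hasDerivAt_pow 4 R).div_const 9)).congr_deriv (by ring)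
    refine (hasDerivAt_mul_one_add_sq_div_three_rpow hP (-(3 : ℝ) / 2)).congr_deriv ?_
    rw [show -(3 : ℝ) / 2 - 1 = -5 / 2 by norm_num]
    ring
  hasDerivAt_deriv R := by
    have hP : HasDerivAt (fun R : ℝ => R * (-5 + 10 * R ^ 2 / 9 + R ^ 4 / 27))
        (-5 + 10 * R ^ 2 / 3 + 5 * R ^ 4 / 27) R :=
      ((hasDerivAt_id' R).fun_mul ((((hasDerivAt_pow 2 R).const_mul 10).div_const 9
        |>.const_add (-5)).fun_add ((hasDerivAt_pow 4 R).div_const 27))).congr_deriv (by ring)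
    refine (hasDerivAt_mul_one_add_sq_div_three_rpow hP (-(5 : ℝ) / 2)).congr_deriv ?_
    rw [θ₀]
    linear_combination -(1 - 2 * R ^ 2 + R ^ 4 / 9) * potential_mul_rpow R

end ZeroEnergy

section Profile

/-- The half-plane `Ω` in which the profiles, as functions of `u = R²`, are holomorphic. -/
def Ω : Set ℂ := {u : ℂ | -(1 : ℝ) / 2 < u.re}

lemma isOpen_Ω : IsOpen Ω := isOpen_lt continuous_const continuous_re

lemma starConvex_Ω : StarConvex ℝ 0 Ω :=
  (convex_halfSpace_re_gt _).starConvex (by norm_num [Ω])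

lemma ofReal_mem_Ω {r : ℝ} (hr : 0 ≤ r) : (r : ℂ) ∈ Ω := by
  simp only [Ω, mem_ofPred_eq, ofReal_re]
  linarith

/-- The decay factor `(1 + u/3)^(-3/2)` of the zero-energy solutions, in `u = R²`. -/
def decay (u : ℂ) : ℂ := (1 + u / 3) ^ ((-(3 : ℝ) / 2 : ℝ) : ℂ)

/-- The profile of `φ₀` in `u = R²`: `φ₀ R = R * φ₀Profile (R²)`. -/
def φ₀Profile (u : ℂ) : ℂ := (1 - u / 3) * decay u

/-- The profile of `θ₀` in `u = R²`: `θ₀ R = θ₀Profile (R²)`. -/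
def θ₀Profile (u : ℂ) : ℂ := (1 - 2 * u + u ^ 2 / 9) * decay u

lemma re_one_add_div_three_pos {u : ℂ} (hu : u ∈ Ω) : 0 < (1 + u / 3).re := by
  have hre : -(1 : ℝ) / 2 < u.re := hu
  rw [add_re, one_re, div_ofNat_re]
  linarith

lemma differentiableOn_decay : DifferentiableOn ℂ decay Ω := by
  intro u hu
  exact .cpow_const (by fun_prop) (.inl (re_one_add_div_three_pos hu))

lemma differentiableOn_φ₀Profile : DifferentiableOn ℂ φ₀Profile Ω :=
  .mul (by fun_prop) differentiableOn_decay

lemma differentiableOn_θ₀Profile : DifferentiableOn ℂ θ₀Profile Ω :=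
  .mul (by fun_prop) differentiableOn_decay

lemma decay_sq (R : ℝ) :
    decay ((R : ℂ) ^ 2) = (((1 + R ^ 2 / 3) ^ (-(3 : ℝ) / 2) : ℝ) : ℂ) := by
  rw [decay, ofReal_cpow (by positivity)]
  push_cast
  rfl

lemma ofReal_φ₀ (R : ℝ) : (φ₀ R : ℂ) = R * φ₀Profile ((R : ℂ) ^ 2) := by
  rw [φ₀, φ₀Profile, decay_sq]
  push_cast
  ring

lemma ofReal_θ₀ (R : ℝ) : (θ₀ R : ℂ) = θ₀Profile ((R : ℂ) ^ 2) := by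
  rw [θ₀, θ₀Profile, decay_sq]
  push_cast
  ring

/-- The weight `(1 + |u|)^(1/2)`: on `Ω` the profiles of `φ₀` and `θ₀` are of sizes `1 / weight`
and `weight`. -/
def weight (u : ℂ) : ℝ := √(1 + ‖u‖)

lemma weight_pos (u : ℂ) : 0 < weight u := Real.sqrt_pos.2 (by positivity)

lemma weight_sq (u : ℂ) : weight u ^ 2 = 1 + ‖u‖ := Real.sq_sqrt (by positivity)

lemma one_add_norm_le {u : ℂ} (hu : u ∈ Ω) : 1 + ‖u‖ ≤ 4 * ‖1 + u / 3‖ := by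
  have hre : -(1 : ℝ) / 2 < u.re := hu
  have hsq : ‖1 + u / 3‖ ^ 2 = 1 + 2 * u.re / 3 + ‖u‖ ^ 2 / 9 := by
    rw [Complex.sq_norm, Complex.sq_norm, normSq_apply, normSq_apply, add_re, add_im, one_re,
      one_im, div_ofNat_re, div_ofNat_im]
    ring
  refine le_of_sq_le_sq ?_ (by positivity)
  rw [mul_pow, hsq]
  linarith [sq_nonneg (‖u‖ - 9 / 7)]

lemma sq_rpow_neg_three_halves {x : ℝ} (hx : 0 ≤ x) : (x ^ 2) ^ (-(3 : ℝ) / 2) = (x ^ 3)⁻¹ := by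
  rw [← Real.rpow_natCast_mul hx, ← Real.rpow_natCast, ← Real.rpow_neg hx]
  norm_num

lemma norm_decay_le {u : ℂ} (hu : u ∈ Ω) : ‖decay u‖ ≤ 8 / weight u ^ 3 := by
  have hw := weight_pos u
  have hpos : 0 < (1 + ‖u‖) / 4 := by positivity
  have hle : (1 + ‖u‖) / 4 ≤ ‖1 + u / 3‖ := by linarith [one_add_norm_le hu]
  calc ‖decay u‖ = ‖1 + u / 3‖ ^ (-(3 : ℝ) / 2) := norm_cpow_real _ _
    _ ≤ ((1 + ‖u‖) / 4) ^ (-(3 : ℝ) / 2) :=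
      Real.rpow_le_rpow_of_nonpos hpos hle (by norm_num)
    _ = ((weight u / 2) ^ 2) ^ (-(3 : ℝ) / 2) := by rw [div_pow, weight_sq]; norm_num
    _ = 8 / weight u ^ 3 := by
      rw [sq_rpow_neg_three_halves (by positivity), div_pow, inv_div]
      norm_num

lemma norm_φ₀Profile_le {u : ℂ} (hu : u ∈ Ω) : ‖φ₀Profile u‖ ≤ 8 * (weight u)⁻¹ := by
  have hw := weight_pos u
  calc ‖φ₀Profile u‖ ≤ weight u ^ 2 * (8 / weight u ^ 3) := by
        refine norm_mul_le_of_le ?_ (norm_decay_le hu)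
        refine (norm_sub_le _ _).trans ?_
        rw [weight_sq, norm_one, norm_div, norm_ofNat]
        linarith [norm_nonneg u]
    _ = 8 * (weight u)⁻¹ := by field_simp

lemma norm_θ₀Profile_le {u : ℂ} (hu : u ∈ Ω) : ‖θ₀Profile u‖ ≤ 8 * weight u := by
  have hw := weight_pos u
  calc ‖θ₀Profile u‖ ≤ (weight u ^ 2) ^ 2 * (8 / weight u ^ 3) := by
        refine norm_mul_le_of_le ?_ (norm_decay_le hu)
        refine (norm_add₃_le (a := 1) (b := -(2 * u)) (c := u ^ 2 / 9)).trans ?_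
        rw [weight_sq, norm_one, norm_neg, norm_mul, norm_div, norm_pow, norm_ofNat, norm_ofNat]
        nlinarith [sq_nonneg ‖u‖]
    _ = 8 * weight u := by field_simp

lemma weight_sq_mul_le (u : ℂ) {t : ℝ} (ht : t ∈ Ioc (0 : ℝ) 1) :
    weight ((t : ℂ) ^ 2 * u) ≤ weight u := by
  have ht2 : t ^ 2 ≤ 1 := pow_le_one₀ ht.1.le ht.2
  rw [weight, weight, norm_mul, norm_pow, norm_real, Real.norm_of_nonneg ht.1.le]
  gcongr
  exact mul_le_of_le_one_left (norm_nonneg u) ht2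

lemma mul_weight_le (u : ℂ) {t : ℝ} (ht : t ∈ Ioc (0 : ℝ) 1) :
    t * weight u ≤ weight ((t : ℂ) ^ 2 * u) := by
  have ht2 : t ^ 2 ≤ 1 := pow_le_one₀ ht.1.le ht.2
  refine Real.le_sqrt_of_sq_le ?_
  rw [mul_pow, weight_sq, norm_mul, norm_pow, norm_real, Real.norm_of_nonneg ht.1.le]
  linarith

lemma isProfileWeight_inv_weight : IsProfileWeight weight (fun u => (weight u)⁻¹) 1 where
  pos u := inv_pos.2 (weight_pos u)
  pow_mul_le u t ht := by
    rw [mul_inv_cancel₀ (weight_pos _).ne', mul_inv_cancel₀ (weight_pos _).ne']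
    simpa using ht.2
  pow_succ_mul_inv_le u t ht := by
    have h := mul_weight_le u ht
    have h1 := weight_pos u
    have h2 := weight_pos ((t : ℂ) ^ 2 * u)
    calc t ^ 2 * ((weight ((t : ℂ) ^ 2 * u))⁻¹ * (weight ((t : ℂ) ^ 2 * u))⁻¹)
        = (t / weight ((t : ℂ) ^ 2 * u)) ^ 2 := by ring
      _ ≤ (1 / weight u) ^ 2 := by
        refine pow_le_pow_left₀ (div_pos ht.1 h2).le ?_ 2
        rwa [div_le_div_iff₀ h2 h1, one_mul]
      _ = (weight u)⁻¹ * (weight u)⁻¹ := by ring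

lemma isProfileWeight_weight : IsProfileWeight weight weight 0 where
  pos := weight_pos
  pow_mul_le u t ht := by
    rw [pow_zero, one_mul]
    exact mul_self_le_mul_self (weight_pos _).le (weight_sq_mul_le u ht)
  pow_succ_mul_inv_le u t ht := by
    rw [inv_mul_cancel₀ (weight_pos _).ne', inv_mul_cancel₀ (weight_pos _).ne']
    simpa using ht.2

end Profile

section Expansion

/-- The kernel `θ₀(R) φ₀(s) - φ₀(R) θ₀(s)` of the right inverse of `𝓛` with zero initial data. -/
def greenKernel : C(ℝ × ℝ, ℂ) where
  toFun q := θ₀ q.1 * φ₀ q.2 - φ₀ q.1 * θ₀ q.2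
  continuous_toFun := by
    have hφ₀ := isSolution_φ₀.continuous
    have hθ₀ := isSolution_θ₀.continuous
    fun_prop

lemma greenKernel_apply (R s : ℝ) : greenKernel (R, s) = θ₀ R * φ₀ s - φ₀ R * θ₀ s := rfl

lemma continuous_comp_ofReal_sq {g : ℂ → ℂ} (hg : DifferentiableOn ℂ g Ω) :
    Continuous fun s : ℝ => g ((s : ℂ) ^ 2) :=
  hg.continuousOn.comp_continuous (by fun_prop) fun s =>
    ofReal_pow s 2 ▸ ofReal_mem_Ω (sq_nonneg s)

lemma differentiableOn_profileCoeff_φ₀_θ₀ {F : ℂ → ℂ} (hF : DifferentiableOn ℂ F Ω) (p n : ℕ) :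
    DifferentiableOn ℂ (profileCoeff φ₀Profile θ₀Profile p F n) Ω :=
  differentiableOn_profileCoeff isOpen_Ω starConvex_Ω differentiableOn_φ₀Profile
    differentiableOn_θ₀Profile hF p n

lemma volterra_greenKernel_pow {F : ℂ → ℂ} (hF : DifferentiableOn ℂ F Ω) {f : C(ℝ, ℂ)} {p : ℕ}
    (hf : ∀ s : ℝ, f s = (s : ℂ) ^ p * F ((s : ℂ) ^ 2)) (n : ℕ) (R : ℝ) :
    (volterra greenKernel ^ n) f R
      = (R : ℂ) ^ (2 * n + p) * profileCoeff φ₀Profile θ₀Profile p F n ((R : ℂ) ^ 2) := by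
  induction n generalizing R with
  | zero => simpa [profileCoeff] using hf R
  | succ n ih =>
    rw [pow_succ', Module.End.mul_apply, volterra_apply, profileCoeff,
      show 2 * (n + 1) + p = 2 * n + p + 2 by ring,
      ← integral_mul_profile (continuous_comp_ofReal_sq differentiableOn_φ₀Profile)
        (continuous_comp_ofReal_sq differentiableOn_θ₀Profile)
        (continuous_comp_ofReal_sq (differentiableOn_profileCoeff_φ₀_θ₀ hF p n))]
    simp only [ih, greenKernel_apply, ofReal_φ₀, ofReal_θ₀]

variable {y y' : ℝ → ℂ} {z : ℂ}

lemma IsSolution.eq_add_smul_volterra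
    (hy : IsSolution (fun R => (potential R : ℂ) - z) y y') {f : C(ℝ, ℂ)}
    (hf : ∀ R : ℝ, f R = y' 0 * φ₀ R + y 0 * θ₀ R) :
    (⟨y, hy.continuous⟩ : C(ℝ, ℂ)) = f + z • volterra greenKernel ⟨y, hy.continuous⟩ := by
  ext R
  have h := isSolution_φ₀.ofReal.variation_of_parameters (by simp [φ₀]) (by simp)
    isSolution_θ₀.ofReal (by simp [θ₀]) (by simp) hy (Q₁ := fun R => (potential R : ℂ) - z)
    (by simpa [Pi.sub_def] using continuous_const) R
  rw [ContinuousMap.coe_mk, h, ContinuousMap.add_apply, hf, ContinuousMap.smul_apply, smul_eq_mul,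
    volterra_apply, ← intervalIntegral.integral_const_mul]
  congr 2 with s
  rw [greenKernel_apply, ContinuousMap.coe_mk]
  ring

lemma IsSolution.hasSum_profileCoeff
    (hy : IsSolution (fun R => (potential R : ℂ) - z) y y') {F : ℂ → ℂ}
    (hF : DifferentiableOn ℂ F Ω) {p : ℕ}
    (hyF : ∀ R : ℝ, y' 0 * φ₀ R + y 0 * θ₀ R = (R : ℂ) ^ p * F ((R : ℂ) ^ 2)) {R : ℝ}
    (hR : 0 ≤ R) :
    HasSum (fun j : ℕ => (R : ℂ) ^ p * (((R : ℂ) ^ 2 * z) ^ (j + 1)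
        * profileCoeff φ₀Profile θ₀Profile p F (j + 1) ((R : ℂ) ^ 2)))
      (y R - (R : ℂ) ^ p * F ((R : ℂ) ^ 2)) := by
  let f : C(ℝ, ℂ) := ⟨fun R => (R : ℂ) ^ p * F ((R : ℂ) ^ 2),
    .mul (by fun_prop) (continuous_comp_ofReal_sq hF)⟩
  have h := hasSum_volterra_pow (hy.eq_add_smul_volterra (f := f) fun R => (hyF R).symm) hR
  have hterm (n : ℕ) : z ^ n * (volterra greenKernel ^ n) f R = (R : ℂ) ^ p
      * (((R : ℂ) ^ 2 * z) ^ n * profileCoeff φ₀Profile θ₀Profile p F n ((R : ℂ) ^ 2)) := by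
    rw [volterra_greenKernel_pow hF (f := f) fun _ => rfl]
    ring
  simp only [hterm] at h
  simpa [profileCoeff] using (hasSum_nat_add_iff' 1).2 h

lemma isSolution_of_schrodinger (hd : ∀ R, HasDerivAt y (deriv y R) R)
    (hdd : ∀ R, HasDerivAt (deriv y) (deriv (deriv y) R) R)
    (heq : ∀ R : ℝ, -deriv (deriv y) R - (5 / (1 + (R : ℂ) ^ 2 / 3) ^ 2) * y R = z * y R) :
    IsSolution (fun R => (potential R : ℂ) - z) y (deriv y) where
  hasDerivAt := hd
  hasDerivAt_deriv R := (hdd R).congr_deriv <| by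
    rw [potential]
    push_cast
    linear_combination -heq R

end Expansion

section Coefficients

/-- The coefficient `φ_j` of the expansion of `φ(·, z)`. The factor `u = R²` makes up for the
normalisation of the series by `R⁻¹`. -/
def φCoeff (j : ℕ) (u : ℂ) : ℂ := u * profileCoeff φ₀Profile θ₀Profile 1 φ₀Profile j u

/-- The coefficient `θ_j` of the expansion of `θ(·, z)`. -/
def θCoeff (j : ℕ) : ℂ → ℂ := profileCoeff φ₀Profile θ₀Profile 0 θ₀Profile j

lemma differentiableOn_φCoeff (j : ℕ) : DifferentiableOn ℂ (φCoeff j) Ω :=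
  differentiableOn_id.mul (differentiableOn_profileCoeff_φ₀_θ₀ differentiableOn_φ₀Profile 1 j)

lemma differentiableOn_θCoeff (j : ℕ) : DifferentiableOn ℂ (θCoeff j) Ω :=
  differentiableOn_profileCoeff_φ₀_θ₀ differentiableOn_θ₀Profile 0 j

lemma norm_profileCoeff_φ₀_θ₀_succ_le {D : ℂ → ℝ} {p : ℕ} (hD : IsProfileWeight weight D p)
    {F : ℂ → ℂ} (hF : ∀ u ∈ Ω, ‖F u‖ ≤ 8 * D u) (j : ℕ) {u : ℂ} (hu : u ∈ Ω) :
    ‖profileCoeff φ₀Profile θ₀Profile p F (j + 1) u‖ ≤ 1024 ^ (j + 1) / j.factorial * D u := by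
  have hDu := hD.pos u
  have hfact : (j.factorial : ℝ) ≤ (j + 1).factorial :=
    mod_cast Nat.factorial_le j.le_succ
  calc ‖profileCoeff φ₀Profile θ₀Profile p F (j + 1) u‖
      ≤ 8 * (2 * 8 ^ 2) ^ (j + 1) / (j + 1).factorial * D u :=
        norm_profileCoeff_le starConvex_Ω weight_pos hD (by norm_num)
          (fun _ => norm_φ₀Profile_le) (fun _ => norm_θ₀Profile_le) hF (j + 1) u hu
    _ ≤ 8 ^ (j + 1) * (2 * 8 ^ 2) ^ (j + 1) / j.factorial * D u := by
        gcongr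
        exact le_self_pow₀ (by norm_num) j.succ_ne_zero
    _ = 1024 ^ (j + 1) / j.factorial * D u := by rw [← mul_pow]; norm_num

lemma norm_φCoeff_succ_le (j : ℕ) {u : ℂ} (hu : u ∈ Ω) :
    ‖φCoeff (j + 1) u‖ ≤ 1024 ^ (j + 1) / j.factorial * ‖u‖ / √(1 + ‖u‖) :=
  calc ‖φCoeff (j + 1) u‖ ≤ ‖u‖ * (1024 ^ (j + 1) / j.factorial * (weight u)⁻¹) :=
        norm_mul_le_of_le le_rfl
          (norm_profileCoeff_φ₀_θ₀_succ_le isProfileWeight_inv_weight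
            (fun _ => norm_φ₀Profile_le) j hu)
    _ = 1024 ^ (j + 1) / j.factorial * ‖u‖ / √(1 + ‖u‖) := by rw [weight]; ring

lemma norm_θCoeff_succ_le (j : ℕ) {u : ℂ} (hu : u ∈ Ω) :
    ‖θCoeff (j + 1) u‖ ≤ 1024 ^ (j + 1) / j.factorial * √(1 + ‖u‖) :=
  norm_profileCoeff_φ₀_θ₀_succ_le isProfileWeight_weight (fun _ => norm_θ₀Profile_le) j hu

variable {y y' : ℝ → ℂ} {z : ℂ}

lemma hasSum_φCoeff (hy : IsSolution (fun R => (potential R : ℂ) - z) y y')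
    (h0 : y 0 = 0) (h0' : y' 0 = 1) {R : ℝ} (hR : 0 ≤ R) :
    HasSum (fun j : ℕ => ((R : ℂ) ^ 2 * z) ^ (j + 1) * φCoeff (j + 1) ((R : ℂ) ^ 2))
      (R * (y R - φ₀ R)) := by
  have h := hy.hasSum_profileCoeff differentiableOn_φ₀Profile (p := 1)
    (fun s => by rw [h0, h0', ofReal_φ₀]; ring) hR
  have hterm (j : ℕ) : ((R : ℂ) ^ 2 * z) ^ (j + 1) * φCoeff (j + 1) ((R : ℂ) ^ 2)
      = R * ((R : ℂ) ^ 1 * (((R : ℂ) ^ 2 * z) ^ (j + 1)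
        * profileCoeff φ₀Profile θ₀Profile 1 φ₀Profile (j + 1) ((R : ℂ) ^ 2))) := by
    rw [φCoeff]
    ring
  simpa only [hterm, ofReal_φ₀, pow_one] using h.mul_left (R : ℂ)

lemma hasSum_θCoeff (hy : IsSolution (fun R => (potential R : ℂ) - z) y y')
    (h0 : y 0 = 1) (h0' : y' 0 = 0) {R : ℝ} (hR : 0 ≤ R) :
    HasSum (fun j : ℕ => ((R : ℂ) ^ 2 * z) ^ (j + 1) * θCoeff (j + 1) ((R : ℂ) ^ 2))
      (y R - θ₀ R) := by
  have h := hy.hasSum_profileCoeff differentiableOn_θ₀Profile (p := 0)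
    (fun s => by rw [h0, h0', ofReal_θ₀]; ring) hR
  simpa only [pow_zero, one_mul, ← ofReal_θ₀, θCoeff] using h

end Coefficients

section Asymptotics

lemma φCoeff_one (u : ℂ) : φCoeff 1 u
    = u * (θ₀Profile u * dilationMoment 2 (φ₀Profile * φ₀Profile) u
      - φ₀Profile u * dilationMoment 1 (θ₀Profile * φ₀Profile) u) := rfl

lemma tendsto_φCoeff_one_nhdsNE_zero :
    Tendsto (fun u : ℂ => φCoeff 1 u / (-u / 6)) (𝓝[≠] 0) (𝓝 1) := by
  have hcont : ContinuousAt (profileCoeff φ₀Profile θ₀Profile 1 φ₀Profile 1) 0 :=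
    (differentiableOn_profileCoeff_φ₀_θ₀ differentiableOn_φ₀Profile 1 1).continuousOn.continuousAt
      (isOpen_Ω.mem_nhds (mod_cast ofReal_mem_Ω le_rfl))
  have hzero : profileCoeff φ₀Profile θ₀Profile 1 φ₀Profile 1 0 = -1 / 6 := by
    simp only [profileCoeff, profileStep, dilationMoment_zero, Pi.mul_apply, φ₀Profile, θ₀Profile,
      decay]
    norm_num
  have hlim := (hcont.tendsto.mono_left (nhdsWithin_le_nhds (s := {0}ᶜ))).const_mul (-6 : ℂ)
  rw [hzero, show (-6 : ℂ) * (-1 / 6) = 1 by norm_num] at hlim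
  refine hlim.congr' ?_
  filter_upwards [self_mem_nhdsWithin] with u hu
  have hu : u ≠ 0 := hu
  rw [φCoeff]
  field_simp

lemma tendsto_inv_sq_atTop : Tendsto (fun R : ℝ => (R ^ 2)⁻¹) atTop (𝓝 0) :=
  (tendsto_pow_atTop two_ne_zero).inv_tendsto_atTop

lemma tendsto_ofReal_nhdsGT_zero : Tendsto (fun u : ℝ => (u : ℂ)) (𝓝[>] 0) (𝓝[≠] 0) := by
  simpa using continuous_ofReal.continuousWithinAt.tendsto_nhdsWithin (x := 0)
    fun u (hu : u ∈ Ioi 0) => ofReal_ne_zero.2 (ne_of_gt hu)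

lemma tendsto_pow_three_mul_rpow :
    Tendsto (fun R : ℝ => R ^ 3 * (1 + R ^ 2 / 3) ^ (-(3 : ℝ) / 2)) atTop (𝓝 (3 * √3)) := by
  have hbase : Tendsto (fun R : ℝ => (R ^ 2)⁻¹ + (√3)⁻¹ ^ 2) atTop (𝓝 ((√3)⁻¹ ^ 2)) := by
    simpa only [zero_add] using tendsto_inv_sq_atTop.add_const ((√3)⁻¹ ^ 2)
  have hlim := hbase.rpow_const (p := -(3 : ℝ) / 2) (.inl (by positivity))
  have hvalue : (((√3)⁻¹ ^ 3)⁻¹ : ℝ) = 3 * √3 := by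
    rw [inv_pow, inv_inv, pow_succ, Real.sq_sqrt zero_le_three]
  rw [sq_rpow_neg_three_halves (by positivity), hvalue] at hlim
  refine hlim.congr' ?_
  filter_upwards [eventually_gt_atTop 0] with R hR
  have hquot : (R ^ 2)⁻¹ + (√3)⁻¹ ^ 2 = (1 + R ^ 2 / 3) / R ^ 2 := by
    rw [inv_pow, Real.sq_sqrt zero_le_three]
    field_simp
  rw [hquot, Real.div_rpow (by positivity) (by positivity), sq_rpow_neg_three_halves hR.le,
    div_inv_eq_mul, mul_comm]

lemma tendsto_φ₀_atTop : Tendsto φ₀ atTop (𝓝 (-√3)) := by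
  have hlim := (tendsto_inv_sq_atTop.sub_const (1 / 3)).mul tendsto_pow_three_mul_rpow
  rw [show (0 - 1 / 3) * (3 * √3) = -√3 by ring] at hlim
  refine hlim.congr' ?_
  filter_upwards [eventually_gt_atTop 0] with R hR
  rw [φ₀]
  field_simp

lemma tendsto_θ₀_div_atTop : Tendsto (fun R => θ₀ R / R) atTop (𝓝 (√3 / 3)) := by
  have hlim := (((tendsto_inv_sq_atTop.pow 2).sub (tendsto_inv_sq_atTop.const_mul 2)).add_const
    (1 / 9)).mul tendsto_pow_three_mul_rpow
  rw [show ((0 : ℝ) ^ 2 - 2 * 0 + 1 / 9) * (3 * √3) = √3 / 3 by ring] at hlim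
  refine hlim.congr' ?_
  filter_upwards [eventually_gt_atTop 0] with R hR
  rw [θ₀]
  field_simp

lemma φ₀_sqrt {r : ℝ} (hr : 0 ≤ r) : (φ₀ (√r) : ℂ) = √r * φ₀Profile r := by
  rw [ofReal_φ₀, ← ofReal_pow, Real.sq_sqrt hr]

lemma θ₀_sqrt {r : ℝ} (hr : 0 ≤ r) : (θ₀ (√r) : ℂ) = θ₀Profile r := by
  rw [ofReal_θ₀, ← ofReal_pow, Real.sq_sqrt hr]

lemma tendsto_θ₀Profile_mul_φ₀Profile_atTop :
    Tendsto (fun r : ℝ => (θ₀Profile * φ₀Profile) r) atTop (𝓝 (-1)) := by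
  have hlim := ((tendsto_θ₀_div_atTop.mul tendsto_φ₀_atTop).comp Real.tendsto_sqrt_atTop).ofReal
  rw [show √3 / 3 * -√3 = -1 by linarith [Real.mul_self_sqrt zero_le_three]] at hlim
  push_cast at hlim
  refine hlim.congr' ?_
  filter_upwards [eventually_gt_atTop 0] with r hr
  have hsqrt : ((√r : ℝ) : ℂ) ≠ 0 := by simp [hr.ne', hr.le]
  rw [Function.comp_apply, ofReal_mul, ofReal_div, θ₀_sqrt hr.le, φ₀_sqrt hr.le, Pi.mul_apply]
  field_simp

lemma tendsto_mul_φ₀Profile_sq_atTop :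
    Tendsto (fun r : ℝ => r * (φ₀Profile * φ₀Profile) r) atTop (𝓝 3) := by
  have hlim := ((tendsto_φ₀_atTop.mul tendsto_φ₀_atTop).comp Real.tendsto_sqrt_atTop).ofReal
  rw [neg_mul_neg, Real.mul_self_sqrt zero_le_three] at hlim
  refine hlim.congr' ?_
  filter_upwards [eventually_ge_atTop 0] with r hr
  have hsq : (r : ℂ) = (√r : ℂ) ^ 2 := by rw [← ofReal_pow, Real.sq_sqrt hr]
  rw [Function.comp_apply, ofReal_mul, φ₀_sqrt hr, Pi.mul_apply]
  linear_combination -(φ₀Profile r ^ 2) * hsq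

lemma continuousOn_comp_ofReal {g : ℂ → ℂ} (hg : DifferentiableOn ℂ g Ω) :
    ContinuousOn (fun r : ℝ => g r) (Ici 0) :=
  hg.continuousOn.comp (by fun_prop) fun _ => ofReal_mem_Ω

lemma tendsto_dilationMoment_θ₀Profile_mul_φ₀Profile :
    Tendsto (fun r : ℝ => dilationMoment 1 (θ₀Profile * φ₀Profile) r) atTop (𝓝 (-1 / 2)) := by
  have h := tendsto_dilationMoment_atTop 1 (M := 8 * 8)
    (continuousOn_comp_ofReal (differentiableOn_θ₀Profile.mul differentiableOn_φ₀Profile))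
    (fun r hr => ?_) tendsto_θ₀Profile_mul_φ₀Profile_atTop
  · convert h using 2
    norm_num
  · have hw := weight_pos (r : ℂ)
    calc ‖(θ₀Profile * φ₀Profile) r‖ ≤ 8 * weight r * (8 * (weight r)⁻¹) :=
          norm_mul_le_of_le (norm_θ₀Profile_le (ofReal_mem_Ω hr))
            (norm_φ₀Profile_le (ofReal_mem_Ω hr))
      _ = 8 * 8 := by field_simp

lemma tendsto_mul_dilationMoment_φ₀Profile_sq :
    Tendsto (fun r : ℝ => r * dilationMoment 2 (φ₀Profile * φ₀Profile) r) atTop (𝓝 3) := by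
  have hdiff : DifferentiableOn ℂ (fun v => v * (φ₀Profile * φ₀Profile) v) Ω :=
    differentiableOn_id.mul (differentiableOn_φ₀Profile.mul differentiableOn_φ₀Profile)
  have h := tendsto_dilationMoment_atTop 0 (M := 8 * 8) (continuousOn_comp_ofReal hdiff)
    (fun r hr => ?_) tendsto_mul_φ₀Profile_sq_atTop
  · simpa [mul_dilationMoment_add_two] using h
  · have hw := weight_pos (r : ℂ)
    calc ‖(r : ℂ) * (φ₀Profile * φ₀Profile) r‖
        ≤ weight r ^ 2 * (8 * (weight r)⁻¹ * (8 * (weight r)⁻¹)) :=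
          norm_mul_le_of_le (by rw [weight_sq]; linarith [norm_nonneg (r : ℂ)])
            (norm_mul_le_of_le (norm_φ₀Profile_le (ofReal_mem_Ω hr))
              (norm_φ₀Profile_le (ofReal_mem_Ω hr)))
      _ = 8 * 8 := by field_simp

lemma tendsto_φCoeff_one_atTop :
    Tendsto (fun u : ℝ => φCoeff 1 u / ((√3 / 2 * √u : ℝ) : ℂ)) atTop (𝓝 1) := by
  have hφ₀ := (tendsto_φ₀_atTop.comp Real.tendsto_sqrt_atTop).ofReal
  have hθ₀ := (tendsto_θ₀_div_atTop.comp Real.tendsto_sqrt_atTop).ofReal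
  have hlim := ((hθ₀.mul tendsto_mul_dilationMoment_φ₀Profile_sq).sub
    (hφ₀.mul tendsto_dilationMoment_θ₀Profile_mul_φ₀Profile)).div_const ((√3 / 2 : ℝ) : ℂ)
  have hsqrt3 : ((√3 : ℝ) : ℂ) ≠ 0 := by simp
  have hvalue : (((√3 / 3 : ℝ) : ℂ) * 3 - ((-√3 : ℝ) : ℂ) * (-1 / 2)) / ((√3 / 2 : ℝ) : ℂ) = 1 := by
    push_cast
    field_simp
    norm_num
  rw [hvalue] at hlim
  refine hlim.congr' ?_
  filter_upwards [eventually_gt_atTop 0] with u hu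
  have hsqrt : ((√u : ℝ) : ℂ) ≠ 0 := by simp [hu.ne', hu.le]
  have hsq : (u : ℂ) = (√u : ℂ) ^ 2 := by rw [← ofReal_pow, Real.sq_sqrt hu.le]
  rw [φCoeff_one]
  simp only [Function.comp_apply, ofReal_div, θ₀_sqrt hu.le, φ₀_sqrt hu.le, ofReal_mul]
  field_simp
  linear_combination φ₀Profile u * dilationMoment 1 (θ₀Profile * φ₀Profile) u * hsq

end Asymptotics

end

/-- Absolutely convergent expansions of the fundamental system `φ(R,z)`, `θ(R,z)` of
`𝓛 y = z y`:
`φ(R,z) = φ₀(R) + R⁻¹ Σ_{j≥1} (R²z)^j φ_j(R²)` and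
`θ(R,z) = θ₀(R) + Σ_{j≥1} (R²z)^j θ_j(R²)`, with `φ_j, θ_j` holomorphic on
`Ω = {Re u > -1/2}` obeying `|φ_j(u)| ≤ C^j/(j-1)! |u|(1+|u|)^{-1/2}` and
`|θ_j(u)| ≤ C^j/(j-1)! (1+|u|)^{1/2}`, and with
`φ₁(u) = -(u/6)(1+o(1))` as `u → 0` and `φ₁(u) = (√3/2)u^{1/2}(1+o(1))` as `u → +∞`. -/
theorem fundamental_system_expansion
    (φ θ : ℂ → ℝ → ℂ)
    (hφ0 : ∀ z, φ z 0 = 0) (hφ0' : ∀ z, deriv (φ z) 0 = 1)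
    (hθ0 : ∀ z, θ z 0 = 1) (hθ0' : ∀ z, deriv (θ z) 0 = 0)
    (hφd : ∀ z R, HasDerivAt (φ z) (deriv (φ z) R) R)
    (hφdd : ∀ z R, HasDerivAt (deriv (φ z)) (deriv (deriv (φ z)) R) R)
    (hφeq : ∀ z, ∀ R : ℝ,
      - deriv (deriv (φ z)) R - (5 / (1 + (R : ℂ) ^ 2 / 3) ^ 2) * φ z R = z * φ z R)
    (hθd : ∀ z R, HasDerivAt (θ z) (deriv (θ z) R) R)
    (hθdd : ∀ z R, HasDerivAt (deriv (θ z)) (deriv (deriv (θ z)) R) R)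
    (hθeq : ∀ z, ∀ R : ℝ,
      - deriv (deriv (θ z)) R - (5 / (1 + (R : ℂ) ^ 2 / 3) ^ 2) * θ z R = z * θ z R) :
    ∃ (C : ℝ) (φj θj : ℕ → ℂ → ℂ), 0 < C ∧
      -- holomorphy on Ω = {Re u > -1/2}
      (∀ j : ℕ, DifferentiableOn ℂ (φj (j + 1)) {u : ℂ | -(1 : ℝ) / 2 < u.re} ∧
                DifferentiableOn ℂ (θj (j + 1)) {u : ℂ | -(1 : ℝ) / 2 < u.re}) ∧
      -- the bounds on the coefficients
      (∀ j : ℕ, ∀ u : ℂ, -(1 : ℝ) / 2 < u.re →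
        ‖φj (j + 1) u‖ ≤ C ^ (j + 1) / (Nat.factorial j) * ‖u‖ / Real.sqrt (1 + ‖u‖) ∧
        ‖θj (j + 1) u‖ ≤ C ^ (j + 1) / (Nat.factorial j) * Real.sqrt (1 + ‖u‖)) ∧
      -- the absolutely convergent expansions, for every z ∈ ℂ and R > 0
      (∀ z : ℂ, ∀ R : ℝ, 0 < R →
        Summable (fun j : ℕ => ‖((R : ℂ) ^ 2 * z) ^ (j + 1) * φj (j + 1) ((R : ℂ) ^ 2)‖) ∧
        HasSum (fun j : ℕ => ((R : ℂ) ^ 2 * z) ^ (j + 1) * φj (j + 1) ((R : ℂ) ^ 2))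
          ((R : ℂ) * (φ z R - (φ₀ R : ℂ))) ∧
        Summable (fun j : ℕ => ‖((R : ℂ) ^ 2 * z) ^ (j + 1) * θj (j + 1) ((R : ℂ) ^ 2)‖) ∧
        HasSum (fun j : ℕ => ((R : ℂ) ^ 2 * z) ^ (j + 1) * θj (j + 1) ((R : ℂ) ^ 2))
          (θ z R - (θ₀ R : ℂ))) ∧
      -- asymptotics of φ₁
      Tendsto (fun u : ℝ => φj 1 (u : ℂ) / (-(u : ℂ) / 6)) (𝓝[>] (0 : ℝ)) (𝓝 1) ∧
      Tendsto (fun u : ℝ => φj 1 (u : ℂ) / ((Real.sqrt 3 / 2 * Real.sqrt u : ℝ) : ℂ))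
        atTop (𝓝 1) := by
  have hφ z := isSolution_of_schrodinger (hφd z) (hφdd z) (hφeq z)
  have hθ z := isSolution_of_schrodinger (hθd z) (hθdd z) (hθeq z)
  refine ⟨1024, φCoeff, θCoeff, by norm_num,
    fun j => ⟨differentiableOn_φCoeff (j + 1), differentiableOn_θCoeff (j + 1)⟩,
    fun j u hu => ⟨norm_φCoeff_succ_le j hu, norm_θCoeff_succ_le j hu⟩, fun z R hR => ?_,
    tendsto_φCoeff_one_nhdsNE_zero.comp tendsto_ofReal_nhdsGT_zero, tendsto_φCoeff_one_atTop⟩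
  have hsumφ := hasSum_φCoeff (hφ z) (hφ0 z) (hφ0' z) hR.le
  have hsumθ := hasSum_θCoeff (hθ z) (hθ0 z) (hθ0' z) hR.le
  exact ⟨hsumφ.summable.norm, hsumφ, hsumθ.summable.norm, hsumθ⟩

end SmallEnergyExpansion
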